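/- arXiv:2406.10578 — 5 statements merged into one kernel-verified Lean document; each statement's English description precedes it below -/
import Mathlib

section
/- Let F(x,y) = r·φ(u,s,v,t) be a general spherically symmetric metric on a domain of ℝⁿ. At any point (x,y) with y ≠ 0 where φ is smooth, the mixed second derivatives are given by ∂²F/∂x^k∂y^l = (2/r)(φ_u − sφ_us − tφ_ut)x_k y_l + (1/r)(φ_v − sφ_vs − tφ_vt)a_k y_l − (1/r²)(sφ_ss + tφ_st)y_k y_l + (1/r)(φ_st a_l y_k + φ_ss x_l y_k) + 2(φ_us x_l x_k + φ_ut a_l x_k) + φ_vt a_k a_l + φ_s δ_{lk} + φ_vs a_k x_l for all indices k, l. -/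
/-!
Both derivatives are instances of the chain rule for a composite
`z ↦ φ (U z) (S z) (V z) (T z)` (`hasFDerivAt_comp4`).  In the variable `x` one has
`∂u/∂x^k = 2 x_k`, `∂s/∂x^k = y_k / r`, `∂v/∂x^k = a_k` and `∂t/∂x^k = 0`, so that
`∂F/∂x^k = r (2 φ_u x_k + φ_v a_k) + φ_s y_k` away from `y = 0`.  This set of `y` is open, so the
formula may be differentiated in `y`, where `∂r/∂y^l = y_l / r`, `u` and `v` are constant, and
`∂(⟨b, y⟩/r)/∂y^l = b_l / r - (⟨b, y⟩/r) y_l / r²` for `b = x` and `b = a`.  The second chain rule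
is applied to `φ_u`, `φ_s` and `φ_v`, which are again smooth (`smooth4_pdu` and its variants).
-/

noncomputable section

open scoped BigOperators

namespace GSSFinsler

/-- `k`-th standard basis vector of `ℝⁿ`. -/
def bvec (n : ℕ) (k : Fin n) : Fin n → ℝ := Pi.single k 1

/-- Standard inner product on `ℝⁿ`. -/
def ip {n : ℕ} (x y : Fin n → ℝ) : ℝ := ∑ i, x i * y i

/-- Euclidean norm on `ℝⁿ`. -/
def nrm {n : ℕ} (y : Fin n → ℝ) : ℝ := Real.sqrt (ip y y)

/-! Partial derivative operators on a smooth function of four real variables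
`φ = φ(u, s, v, t)`. -/

def pdu (f : ℝ → ℝ → ℝ → ℝ → ℝ) (u s v t : ℝ) : ℝ := deriv (fun z => f z s v t) u
def pds (f : ℝ → ℝ → ℝ → ℝ → ℝ) (u s v t : ℝ) : ℝ := deriv (fun z => f u z v t) s
def pdv (f : ℝ → ℝ → ℝ → ℝ → ℝ) (u s v t : ℝ) : ℝ := deriv (fun z => f u s z t) v
def pdt (f : ℝ → ℝ → ℝ → ℝ → ℝ) (u s v t : ℝ) : ℝ := deriv (fun z => f u s v z) t

/-- `u := |x|²`. -/
def uu {n : ℕ} (x : Fin n → ℝ) : ℝ := ip x x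
/-- `s := ⟨x,y⟩/|y|`. -/
def sc {n : ℕ} (x y : Fin n → ℝ) : ℝ := ip x y / nrm y
/-- `v := ⟨a,x⟩`. -/
def vc {n : ℕ} (a x : Fin n → ℝ) : ℝ := ip a x
/-- `t := ⟨a,y⟩/|y|`. -/
def tc {n : ℕ} (a y : Fin n → ℝ) : ℝ := ip a y / nrm y

/-- Evaluation of a function of `(u,s,v,t)` at the point determined by `(a,x,y)`. -/
def ev {n : ℕ} (f : ℝ → ℝ → ℝ → ℝ → ℝ) (a x y : Fin n → ℝ) : ℝ :=
  f (uu x) (sc x y) (vc a x) (tc a y)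

/-- The general spherically symmetric metric `F(x,y) = |y| φ(u,s,v,t)`. -/
def Fm {n : ℕ} (φ : ℝ → ℝ → ℝ → ℝ → ℝ) (a x y : Fin n → ℝ) : ℝ :=
  nrm y * φ (uu x) (sc x y) (vc a x) (tc a y)

/-- Fundamental tensor `g_{ij} := ½ ∂²(F²)/∂y^i∂y^j`. -/
def gm {n : ℕ} (φ : ℝ → ℝ → ℝ → ℝ → ℝ) (a x y : Fin n → ℝ) (i j : Fin n) : ℝ :=
  (1/2) * fderiv ℝ (fun z => fderiv ℝ (fun w => (Fm φ a x w)^2) z (bvec n j)) y (bvec n i)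

/-- Cartan tensor `C_{ijk} := ½ ∂g_{ij}/∂y^k`. -/
def cart {n : ℕ} (φ : ℝ → ℝ → ℝ → ℝ → ℝ) (a x y : Fin n → ℝ) (i j k : Fin n) : ℝ :=
  (1/2) * fderiv ℝ (fun z => gm φ a x z i j) y (bvec n k)

/-- Angular metric `h_{ij} := g_{ij} − F_{y^i}F_{y^j}`. -/
def ang {n : ℕ} (φ : ℝ → ℝ → ℝ → ℝ → ℝ) (a x y : Fin n → ℝ) (i j : Fin n) : ℝ :=
  gm φ a x y i j -
    fderiv ℝ (fun w => Fm φ a x w) y (bvec n i) *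
      fderiv ℝ (fun w => Fm φ a x w) y (bvec n j)

/-- The fundamental tensor as a matrix. -/
def gMat {n : ℕ} (φ : ℝ → ℝ → ℝ → ℝ → ℝ) (a x y : Fin n → ℝ) :
    Matrix (Fin n) (Fin n) ℝ :=
  Matrix.of fun i j => gm φ a x y i j

/-- The inverse fundamental tensor `g^{ij}`. -/
def gInv {n : ℕ} (φ : ℝ → ℝ → ℝ → ℝ → ℝ) (a x y : Fin n → ℝ) :
    Matrix (Fin n) (Fin n) ℝ :=
  (gMat φ a x y)⁻¹

/-- Mean Cartan torsion `I_k := g^{jl} C_{jlk}`. -/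
def mci {n : ℕ} (φ : ℝ → ℝ → ℝ → ℝ → ℝ) (a x y : Fin n → ℝ) (k : Fin n) : ℝ :=
  ∑ j, ∑ l, gInv φ a x y j l * cart φ a x y j l k

/-- Squared norm `‖I‖² := g^{ij} I_i I_j` of the mean Cartan torsion. -/
def normI2 {n : ℕ} (φ : ℝ → ℝ → ℝ → ℝ → ℝ) (a x y : Fin n → ℝ) : ℝ :=
  ∑ i, ∑ j, gInv φ a x y i j * mci φ a x y i * mci φ a x y j

/-- `s_i := x_i − s·y_i/r`. -/
def sv {n : ℕ} (x y : Fin n → ℝ) (i : Fin n) : ℝ := x i - sc x y * (y i / nrm y)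
/-- `t_i := a_i − t·y_i/r`. -/
def tv {n : ℕ} (a y : Fin n → ℝ) (i : Fin n) : ℝ := a i - tc a y * (y i / nrm y)

/-- `‖𝔖‖² := g^{ij}s_is_j`. -/
def nS2 {n : ℕ} (φ : ℝ → ℝ → ℝ → ℝ → ℝ) (a x y : Fin n → ℝ) : ℝ :=
  ∑ i, ∑ j, gInv φ a x y i j * sv x y i * sv x y j
/-- `‖ℜ‖² := g^{ij}s_it_j`. -/
def nR2 {n : ℕ} (φ : ℝ → ℝ → ℝ → ℝ → ℝ) (a x y : Fin n → ℝ) : ℝ :=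
  ∑ i, ∑ j, gInv φ a x y i j * sv x y i * tv a y j
/-- `‖𝔗‖² := g^{ij}t_it_j`. -/
def nT2 {n : ℕ} (φ : ℝ → ℝ → ℝ → ℝ → ℝ) (a x y : Fin n → ℝ) : ℝ :=
  ∑ i, ∑ j, gInv φ a x y i j * tv a y i * tv a y j

/-! The scalars `σ₁, …, σ₁₁` as functions of `(u,s,v,t)`.  Subscripts on `φ`
denote partial derivatives; `φ_{st}` is `pdt (pds φ)` (first `s`, then `t`),
`φ_{ts}` is `pds (pdt φ)`, etc. -/

def sig1 (φ : ℝ → ℝ → ℝ → ℝ → ℝ) (u s v t : ℝ) : ℝ :=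
  φ u s v t - s * pds φ u s v t - t * pdt φ u s v t

def sig2 (φ : ℝ → ℝ → ℝ → ℝ → ℝ) (u s v t : ℝ) : ℝ :=
  sig1 φ u s v t * pds φ u s v t - s * φ u s v t * pds (pds φ) u s v t -
    t * φ u s v t * pds (pdt φ) u s v t

def sig3 (φ : ℝ → ℝ → ℝ → ℝ → ℝ) (u s v t : ℝ) : ℝ :=
  sig1 φ u s v t * pdt φ u s v t - s * φ u s v t * pdt (pds φ) u s v t -
    t * φ u s v t * pdt (pdt φ) u s v t

def sig4 (φ : ℝ → ℝ → ℝ → ℝ → ℝ) (u s v t : ℝ) : ℝ :=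
  3 * pds φ u s v t * pds (pds φ) u s v t + φ u s v t * pds (pds (pds φ)) u s v t

def sig5 (φ : ℝ → ℝ → ℝ → ℝ → ℝ) (u s v t : ℝ) : ℝ :=
  3 * pdt φ u s v t * pdt (pdt φ) u s v t + φ u s v t * pdt (pdt (pdt φ)) u s v t

def sig6 (φ : ℝ → ℝ → ℝ → ℝ → ℝ) (u s v t : ℝ) : ℝ :=
  2 * pds φ u s v t * pdt (pds φ) u s v t + pdt φ u s v t * pds (pds φ) u s v t +
    φ u s v t * pdt (pds (pds φ)) u s v t

def sig7 (φ : ℝ → ℝ → ℝ → ℝ → ℝ) (u s v t : ℝ) : ℝ :=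
  2 * pdt φ u s v t * pds (pdt φ) u s v t + pds φ u s v t * pdt (pdt φ) u s v t +
    φ u s v t * pds (pdt (pdt φ)) u s v t

def sig8 (φ : ℝ → ℝ → ℝ → ℝ → ℝ) (u s v t : ℝ) : ℝ :=
  φ u s v t * (sig1 φ u s v t * sig4 φ u s v t - 3 * sig2 φ u s v t * pds (pds φ) u s v t)

def sig9 (φ : ℝ → ℝ → ℝ → ℝ → ℝ) (u s v t : ℝ) : ℝ :=
  φ u s v t * (sig1 φ u s v t * sig5 φ u s v t - 3 * sig3 φ u s v t * pdt (pdt φ) u s v t)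

def sig10 (φ : ℝ → ℝ → ℝ → ℝ → ℝ) (u s v t : ℝ) : ℝ :=
  φ u s v t * (sig1 φ u s v t * sig6 φ u s v t - 2 * sig2 φ u s v t * pdt (pds φ) u s v t -
    sig3 φ u s v t * pds (pds φ) u s v t)

def sig11 (φ : ℝ → ℝ → ℝ → ℝ → ℝ) (u s v t : ℝ) : ℝ :=
  φ u s v t * (sig1 φ u s v t * sig7 φ u s v t - 2 * sig3 φ u s v t * pds (pdt φ) u s v t -
    sig2 φ u s v t * pdt (pdt φ) u s v t)

/-- The scalar `H` of Lemma 3.2. -/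
def Hc {n : ℕ} (φ : ℝ → ℝ → ℝ → ℝ → ℝ) (a x y : Fin n → ℝ) : ℝ :=
  ((n : ℝ) + 1) * (ev (pds φ) a x y / ev φ a x y +
      ev (pds (sig1 φ)) a x y / ev (sig1 φ) a x y) +
  nS2 φ a x y * (ev (pds (pds (pds φ))) a x y -
      3 * ev (pds (sig1 φ)) a x y * ev (pds (pds φ)) a x y / ev (sig1 φ) a x y) * ev φ a x y +
  2 * nR2 φ a x y * (ev (pdt (pds (pds φ))) a x y -
      (2 * ev (pds (sig1 φ)) a x y * ev (pdt (pds φ)) a x y +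
        ev (pdt (sig1 φ)) a x y * ev (pds (pds φ)) a x y) / ev (sig1 φ) a x y) * ev φ a x y +
  nT2 φ a x y * (ev (pds (pdt (pdt φ))) a x y -
      (2 * ev (pdt (sig1 φ)) a x y * ev (pds (pdt φ)) a x y +
        ev (pds (sig1 φ)) a x y * ev (pdt (pdt φ)) a x y) / ev (sig1 φ) a x y) * ev φ a x y

/-- The scalar `K` of Lemma 3.2. -/
def Kc {n : ℕ} (φ : ℝ → ℝ → ℝ → ℝ → ℝ) (a x y : Fin n → ℝ) : ℝ :=
  ((n : ℝ) + 1) * (ev (pdt φ) a x y / ev φ a x y +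
      ev (pdt (sig1 φ)) a x y / ev (sig1 φ) a x y) +
  nT2 φ a x y * (ev (pdt (pdt (pdt φ))) a x y -
      3 * ev (pdt (sig1 φ)) a x y * ev (pdt (pdt φ)) a x y / ev (sig1 φ) a x y) * ev φ a x y +
  nS2 φ a x y * (ev (pdt (pds (pds φ))) a x y -
      (2 * ev (pds (sig1 φ)) a x y * ev (pdt (pds φ)) a x y +
        ev (pdt (sig1 φ)) a x y * ev (pds (pds φ)) a x y) / ev (sig1 φ) a x y) * ev φ a x y +
  2 * nR2 φ a x y * (ev (pds (pdt (pdt φ))) a x y -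
      (2 * ev (pdt (sig1 φ)) a x y * ev (pds (pdt φ)) a x y +
        ev (pds (sig1 φ)) a x y * ev (pdt (pdt φ)) a x y) / ev (sig1 φ) a x y) * ev φ a x y

/-- The scalar `M` appearing in the proof of Theorem 1.1. -/
def Mc {n : ℕ} (φ : ℝ → ℝ → ℝ → ℝ → ℝ) (a x y : Fin n → ℝ) : ℝ :=
  ev (sig2 φ) a x y * (ev (sig1 φ) a x y * ((n : ℝ) - 2) * ev φ a x y +
      (ip a a - tc a y ^ 2) * ev φ a x y * ev (pdt (pdt φ)) a x y +
      (vc a x - sc x y * tc a y) * ev φ a x y * ev (pdt (pds φ)) a x y) -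
  ev (sig3 φ) a x y * ((vc a x - sc x y * tc a y) * ev φ a x y * ev (pds (pds φ)) a x y +
      (ip a a - tc a y ^ 2) * ev φ a x y * ev (pdt (pds φ)) a x y) +
  ev (sig10 φ) a x y * (vc a x - sc x y * tc a y) -
  ev (sig11 φ) a x y * (ip a a - tc a y ^ 2)

/-- The scalar `N` appearing in the proof of Theorem 1.1. -/
def Nc {n : ℕ} (φ : ℝ → ℝ → ℝ → ℝ → ℝ) (a x y : Fin n → ℝ) : ℝ :=
  ev (sig2 φ) a x y * ((vc a x - sc x y * tc a y) * ev φ a x y * ev (pdt (pdt φ)) a x y +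
      (uu x - sc x y ^ 2) * ev φ a x y * ev (pdt (pds φ)) a x y) -
  ev (sig3 φ) a x y * (ev (sig1 φ) a x y * ((n : ℝ) - 2) * ev φ a x y +
      (uu x - sc x y ^ 2) * ev φ a x y * ev (pds (pds φ)) a x y +
      (vc a x - sc x y * tc a y) * ev φ a x y * ev (pdt (pds φ)) a x y) +
  ev (sig10 φ) a x y * (uu x - sc x y ^ 2) -
  ev (sig11 φ) a x y * (vc a x - sc x y * tc a y)

end GSSFinsler

namespace GSSFinsler

/-- Smoothness of a curried function of four real variables, jointly in all of them. -/
def Smooth4 (f : ℝ → ℝ → ℝ → ℝ → ℝ) : Prop :=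
  ContDiff ℝ (⊤ : ℕ∞) (fun p : ℝ × ℝ × ℝ × ℝ => f p.1 p.2.1 p.2.2.1 p.2.2.2)

/-- The uncurried form of a function of four variables. -/
def unc (f : ℝ → ℝ → ℝ → ℝ → ℝ) (p : ℝ × ℝ × ℝ × ℝ) : ℝ := f p.1 p.2.1 p.2.2.1 p.2.2.2

lemma Smooth4.hasFDerivAt {f : ℝ → ℝ → ℝ → ℝ → ℝ} (hf : Smooth4 f) (p : ℝ × ℝ × ℝ × ℝ) :
    HasFDerivAt (unc f) (fderiv ℝ (unc f) p) p :=
  (ContDiff.differentiable (n := (⊤ : ℕ∞)) hf (by simp) p).hasFDerivAt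

lemma Smooth4.pdu_eq {f : ℝ → ℝ → ℝ → ℝ → ℝ} (hf : Smooth4 f) (u s v t : ℝ) :
    pdu f u s v t = fderiv ℝ (unc f) (u, s, v, t) (1, 0, 0, 0) := by
  have h : HasDerivAt (fun z : ℝ => (z, s, v, t)) ((1 : ℝ), (0 : ℝ), (0 : ℝ), (0 : ℝ)) u :=
    (hasDerivAt_id u).prodMk (hasDerivAt_const u (s, v, t))
  exact ((hf.hasFDerivAt (u, s, v, t)).comp_hasDerivAt u h).deriv

lemma Smooth4.pds_eq {f : ℝ → ℝ → ℝ → ℝ → ℝ} (hf : Smooth4 f) (u s v t : ℝ) :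
    pds f u s v t = fderiv ℝ (unc f) (u, s, v, t) (0, 1, 0, 0) := by
  have h : HasDerivAt (fun z : ℝ => (u, z, v, t)) ((0 : ℝ), (1 : ℝ), (0 : ℝ), (0 : ℝ)) s :=
    (hasDerivAt_const s u).prodMk ((hasDerivAt_id s).prodMk (hasDerivAt_const s (v, t)))
  exact ((hf.hasFDerivAt (u, s, v, t)).comp_hasDerivAt s h).deriv

lemma Smooth4.pdv_eq {f : ℝ → ℝ → ℝ → ℝ → ℝ} (hf : Smooth4 f) (u s v t : ℝ) :
    pdv f u s v t = fderiv ℝ (unc f) (u, s, v, t) (0, 0, 1, 0) := by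
  have h : HasDerivAt (fun z : ℝ => (u, s, z, t)) ((0 : ℝ), (0 : ℝ), (1 : ℝ), (0 : ℝ)) v :=
    (hasDerivAt_const v u).prodMk ((hasDerivAt_const v s).prodMk
      ((hasDerivAt_id v).prodMk (hasDerivAt_const v t)))
  exact ((hf.hasFDerivAt (u, s, v, t)).comp_hasDerivAt v h).deriv

lemma Smooth4.pdt_eq {f : ℝ → ℝ → ℝ → ℝ → ℝ} (hf : Smooth4 f) (u s v t : ℝ) :
    pdt f u s v t = fderiv ℝ (unc f) (u, s, v, t) (0, 0, 0, 1) := by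
  have h : HasDerivAt (fun z : ℝ => (u, s, v, z)) ((0 : ℝ), (0 : ℝ), (0 : ℝ), (1 : ℝ)) t :=
    (hasDerivAt_const t u).prodMk ((hasDerivAt_const t s).prodMk
      ((hasDerivAt_const t v).prodMk (hasDerivAt_id t)))
  exact ((hf.hasFDerivAt (u, s, v, t)).comp_hasDerivAt t h).deriv

lemma Smooth4.fderiv_apply {f : ℝ → ℝ → ℝ → ℝ → ℝ} (hf : Smooth4 f) (e : ℝ × ℝ × ℝ × ℝ) :
    ContDiff ℝ (⊤ : ℕ∞) (fun p => fderiv ℝ (unc f) p e) :=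
  (ContDiff.fderiv_right (m := (⊤ : ℕ∞)) (n := (⊤ : ℕ∞)) hf (by simp)).clm_apply contDiff_const

lemma smooth4_pdu {f : ℝ → ℝ → ℝ → ℝ → ℝ} (hf : Smooth4 f) : Smooth4 (pdu f) := by
  simpa only [Smooth4, hf.pdu_eq] using hf.fderiv_apply (1, 0, 0, 0)

lemma smooth4_pds {f : ℝ → ℝ → ℝ → ℝ → ℝ} (hf : Smooth4 f) : Smooth4 (pds f) := by
  simpa only [Smooth4, hf.pds_eq] using hf.fderiv_apply (0, 1, 0, 0)

lemma smooth4_pdv {f : ℝ → ℝ → ℝ → ℝ → ℝ} (hf : Smooth4 f) : Smooth4 (pdv f) := by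
  simpa only [Smooth4, hf.pdv_eq] using hf.fderiv_apply (0, 0, 1, 0)

/-- The chain rule for a function of four variables, in terms of its partial derivatives. -/
lemma hasFDerivAt_comp4 {E : Type*} [NormedAddCommGroup E] [NormedSpace ℝ E]
    {f : ℝ → ℝ → ℝ → ℝ → ℝ} (hf : Smooth4 f) {U S V T : E → ℝ} {U' S' V' T' : E →L[ℝ] ℝ} {z : E}
    (hU : HasFDerivAt U U' z) (hS : HasFDerivAt S S' z)
    (hV : HasFDerivAt V V' z) (hT : HasFDerivAt T T' z) :
    HasFDerivAt (fun z => f (U z) (S z) (V z) (T z))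
      (pdu f (U z) (S z) (V z) (T z) • U' + pds f (U z) (S z) (V z) (T z) • S' +
        pdv f (U z) (S z) (V z) (T z) • V' + pdt f (U z) (S z) (V z) (T z) • T') z := by
  have h := (hf.hasFDerivAt (U z, S z, V z, T z)).comp z
    (hU.prodMk (hS.prodMk (hV.prodMk hT)))
  refine h.congr_fderiv ?_
  ext w
  rw [hf.pdu_eq, hf.pds_eq, hf.pdv_eq, hf.pdt_eq]
  have hw : (U' w, S' w, V' w, T' w) = U' w • ((1 : ℝ), (0 : ℝ), (0 : ℝ), (0 : ℝ)) +
      S' w • ((0 : ℝ), (1 : ℝ), (0 : ℝ), (0 : ℝ)) + V' w • ((0 : ℝ), (0 : ℝ), (1 : ℝ), (0 : ℝ)) +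
      T' w • ((0 : ℝ), (0 : ℝ), (0 : ℝ), (1 : ℝ)) := by simp
  change fderiv ℝ (unc f) _ (U' w, S' w, V' w, T' w) = _
  rw [hw]
  simp only [map_add, map_smul, add_apply, smul_apply,
    smul_eq_mul]
  ring

/-- `⟨b, ·⟩` as a continuous linear functional. -/
def ipL {n : ℕ} (b : Fin n → ℝ) : (Fin n → ℝ) →L[ℝ] ℝ :=
  ∑ i, b i • ContinuousLinearMap.proj i

lemma ipL_apply {n : ℕ} (b x : Fin n → ℝ) : ipL b x = ip b x := by
  simp [ipL, ip]

lemma ip_comm {n : ℕ} (x y : Fin n → ℝ) : ip x y = ip y x := by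
  simp only [ip, mul_comm]

lemma ip_bvec {n : ℕ} (b : Fin n → ℝ) (k : Fin n) : ip b (bvec n k) = b k := by
  simp [ip, bvec, Pi.single_apply]

lemma ipL_bvec {n : ℕ} (b : Fin n → ℝ) (k : Fin n) : ipL b (bvec n k) = b k := by
  rw [ipL_apply, ip_bvec]

lemma hasFDerivAt_ip {n : ℕ} (b x : Fin n → ℝ) : HasFDerivAt (fun z => ip b z) (ipL b) x := by
  have h : (fun z => ip b z) = ipL b := funext fun z => (ipL_apply b z).symm
  rw [h]
  exact (ipL b).hasFDerivAt

lemma hasFDerivAt_ip_self {n : ℕ} (x : Fin n → ℝ) :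
    HasFDerivAt (fun z => ip z z) ((2 : ℝ) • ipL x) x := by
  have h : HasFDerivAt (fun z : Fin n → ℝ => ∑ i, z i * z i)
      (∑ i, (x i • ContinuousLinearMap.proj (R := ℝ) (φ := fun _ : Fin n => ℝ) i +
        x i • ContinuousLinearMap.proj (R := ℝ) (φ := fun _ : Fin n => ℝ) i)) x :=
    HasFDerivAt.fun_sum fun i _ => (hasFDerivAt_apply i x).mul (hasFDerivAt_apply i x)
  refine h.congr_fderiv ?_
  rw [ipL, Finset.smul_sum]
  exact Finset.sum_congr rfl fun i _ => (two_smul ℝ _).symm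

lemma ip_self_pos {n : ℕ} {y : Fin n → ℝ} (hy : y ≠ 0) : 0 < ip y y := by
  obtain ⟨i, hi⟩ := Function.ne_iff.mp hy
  exact Finset.sum_pos' (fun j _ => mul_self_nonneg _)
    ⟨i, Finset.mem_univ i, mul_self_pos.mpr hi⟩

lemma nrm_pos {n : ℕ} {y : Fin n → ℝ} (hy : y ≠ 0) : 0 < nrm y :=
  Real.sqrt_pos.mpr (ip_self_pos hy)

lemma hasFDerivAt_nrm {n : ℕ} {y : Fin n → ℝ} (hy : y ≠ 0) :
    HasFDerivAt nrm ((1 / nrm y) • ipL y) y := by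
  refine ((hasFDerivAt_ip_self y).sqrt (ip_self_pos hy).ne').congr_fderiv ?_
  rw [smul_smul]
  congr 1
  change 1 / (2 * nrm y) * 2 = _
  have := (nrm_pos hy).ne'
  field_simp

/-- The derivative of `y ↦ ⟨b, y⟩ / |y|`, which is `s` for `b = x` and `t` for `b = a`. -/
lemma hasFDerivAt_ip_div_nrm {n : ℕ} (b : Fin n → ℝ) {y : Fin n → ℝ} (hy : y ≠ 0) :
    HasFDerivAt (fun w => ip b w / nrm w)
      ((1 / nrm y) • ipL b - (ip b y / nrm y / nrm y ^ 2) • ipL y) y := by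
  have hr := (nrm_pos hy).ne'
  have h := (hasFDerivAt_ip b y).mul ((hasDerivAt_inv hr).comp_hasFDerivAt y (hasFDerivAt_nrm hy))
  refine (h.congr_fderiv ?_ : HasFDerivAt (fun w => ip b w * (nrm w)⁻¹) _ y)
  ext w
  simp only [add_apply, sub_apply,
    smul_apply, smul_eq_mul, Function.comp_apply]
  field_simp
  ring

/-- The chain rule in `y` for `f` evaluated at `(u, s, v, t)`; only `s` and `t` depend on `y`. -/
lemma hasFDerivAt_ev_right {n : ℕ} {f : ℝ → ℝ → ℝ → ℝ → ℝ} (hf : Smooth4 f)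
    (a x : Fin n → ℝ) {y : Fin n → ℝ} (hy : y ≠ 0) :
    HasFDerivAt (fun w => ev f a x w)
      (ev (pds f) a x y • ((1 / nrm y) • ipL x - (sc x y / nrm y ^ 2) • ipL y) +
        ev (pdt f) a x y • ((1 / nrm y) • ipL a - (tc a y / nrm y ^ 2) • ipL y)) y := by
  refine (hasFDerivAt_comp4 hf (hasFDerivAt_const (uu x) y) (hasFDerivAt_ip_div_nrm x hy)
    (hasFDerivAt_const (vc a x) y) (hasFDerivAt_ip_div_nrm a hy)).congr_fderiv ?_
  simp only [smul_zero, zero_add, add_zero]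
  rfl

/-- The first derivative `∂F/∂x^k`. -/
lemma fderiv_Fm_left {n : ℕ} {φ : ℝ → ℝ → ℝ → ℝ → ℝ} (hφ : Smooth4 φ)
    (a x : Fin n → ℝ) {w : Fin n → ℝ} (hw : w ≠ 0) (k : Fin n) :
    fderiv ℝ (fun z => Fm φ a z w) x (bvec n k) =
      nrm w * (2 * x k * ev (pdu φ) a x w + a k * ev (pdv φ) a x w) +
        w k * ev (pds φ) a x w := by
  have hr := (nrm_pos hw).ne'
  have hS : HasFDerivAt (fun z => sc z w) ((1 / nrm w) • ipL w) x := by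
    have h := (hasFDerivAt_ip w x).const_mul (1 / nrm w)
    refine h.congr_of_eventuallyEq (Filter.Eventually.of_forall fun z => ?_)
    simp only [sc, ip_comm z w]
    ring
  have h := (hasFDerivAt_comp4 hφ (hasFDerivAt_ip_self x) hS (hasFDerivAt_ip a x)
    (hasFDerivAt_const (tc a w) x)).const_mul (nrm w)
  have h' : HasFDerivAt (fun z => Fm φ a z w) _ x := h
  rw [h'.fderiv]
  simp only [add_apply, smul_apply, smul_eq_mul,
    ipL_bvec, smul_zero, add_zero]
  simp only [ev, uu, vc]
  field_simp
  ring

end GSSFinsler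

open GSSFinsler in
/-- The explicit formula for the mixed second derivatives
`∂²F/∂x^k∂y^l` of a general spherically symmetric metric. -/
theorem Fxy_formula_general_spherically_symmetric
    {n : ℕ} (φ : ℝ → ℝ → ℝ → ℝ → ℝ)
    (hφ : ContDiff ℝ (⊤ : ℕ∞) (fun p : ℝ × ℝ × ℝ × ℝ => φ p.1 p.2.1 p.2.2.1 p.2.2.2))
    (a x y : Fin n → ℝ) (hy : y ≠ 0) :
    ∀ k l : Fin n,
      fderiv ℝ (fun w => fderiv ℝ (fun z => Fm φ a z w) x (bvec n k)) y (bvec n l) =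
        let r := nrm y
        let s := sc x y
        let t := tc a y
        (2 / r) * (ev (pdu φ) a x y - s * ev (pds (pdu φ)) a x y -
            t * ev (pdt (pdu φ)) a x y) * (x k * y l) +
        (1 / r) * (ev (pdv φ) a x y - s * ev (pds (pdv φ)) a x y -
            t * ev (pdt (pdv φ)) a x y) * (a k * y l) -
        (1 / r ^ 2) * (s * ev (pds (pds φ)) a x y + t * ev (pdt (pds φ)) a x y) *
          (y k * y l) +
        (1 / r) * (ev (pdt (pds φ)) a x y * (a l * y k) +
            ev (pds (pds φ)) a x y * (x l * y k)) +
        2 * (ev (pds (pdu φ)) a x y * (x l * x k) + ev (pdt (pdu φ)) a x y * (a l * x k)) +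
        ev (pdt (pdv φ)) a x y * (a k * a l) +
        ev (pds φ) a x y * (if l = k then (1 : ℝ) else 0) +
        ev (pds (pdv φ)) a x y * (a k * x l) := by
  intro k l
  have hs : Smooth4 φ := hφ
  -- The formula for `∂F/∂x^k` holds on the open set `w ≠ 0`, hence near `y`.
  have hev : (fun w => fderiv ℝ (fun z => Fm φ a z w) x (bvec n k)) =ᶠ[nhds y]
      fun w => nrm w * (2 * x k * ev (pdu φ) a x w + a k * ev (pdv φ) a x w) +
        w k * ev (pds φ) a x w := by
    filter_upwards [isOpen_ne.mem_nhds hy] with w hw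
    exact fderiv_Fm_left hs a x hw k
  have h := ((hasFDerivAt_nrm hy).mul
    (((hasFDerivAt_ev_right (smooth4_pdu hs) a x hy).const_mul (2 * x k)).add
      ((hasFDerivAt_ev_right (smooth4_pdv hs) a x hy).const_mul (a k)))).add
    ((hasFDerivAt_apply (𝕜 := ℝ) k y).mul (hasFDerivAt_ev_right (smooth4_pds hs) a x hy))
  rw [(h.congr_of_eventuallyEq hev).fderiv]
  have hr := (nrm_pos hy).ne'
  have hδ : bvec n l k = if l = k then (1 : ℝ) else 0 := by
    simp [bvec, Pi.single_apply, eq_comm]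
  simp only [add_apply, sub_apply,
    smul_apply, smul_eq_mul, ipL_bvec, ContinuousLinearMap.proj_apply, hδ,
    Pi.add_apply]
  field_simp
  ring
end
end

section
/- Let F(x,y) = u·φ(r,s) be a spherically symmetric metric on a domain of ℝⁿ, n ≥ 3. At a point (x,y), y ≠ 0, where the fundamental tensor (g_{ij}) is positive definite, φ > 0, σ₁ := φ − sφ_s ≠ 0, and ρ := φ(σ₁ + (r²−s²)φ_ss) > 0, the norm of the mean Cartan torsion is ‖I‖ = |[(n+1)(σ₁φ_s − sφφ_ss)(σ₁ + (r²−s²)φ_ss) + (r²−s²)(σ₁φ_sss + 3sφ_ss²)φ] / (2uσ₁ρ)| · √((r²−s²)/ρ). -/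
/-!
Write `u = |y|`, `s = ⟨x,y⟩/u`, `l = y/u`, `m = x - s l`, `P = 1 - l lᵀ`, and `w = r² - s²`, so that
`l` is a unit vector, `⟨l,m⟩ = 0` and `|m|² = w`. From `∂ₖu = lₖ`, `∂ₖs = mₖ/u`, `∂ₖlᵢ = Pᵢₖ/u` and
`∂ₖmᵢ = -(mₖlᵢ + sPᵢₖ)/u` one gets, with `b = φφ_s` and primes denoting `∂/∂s`,

* `g = φ² l lᵀ + b (l mᵀ + m lᵀ) + b' m mᵀ + φσ₁ P`,
* `2u Cᵢⱼₖ = b'' mᵢmⱼmₖ + (b - s b') (Pᵢⱼmₖ + Pᵢₖmⱼ + Pⱼₖmᵢ)`.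

The plane spanned by `l` and `m` is invariant under `g`, so `g⁻¹l` and `g⁻¹m` solve a `2 × 2` system of
determinant `φ²ρ` (`inv_mulVec_l`, `inv_mulVec_m`), and `tr(g⁻¹P)` follows from `tr(g⁻¹g) = n`
(`trace_inv_P`). Hence `I` is an explicit multiple of `m`, and the formula follows from
`mᵀg⁻¹m = w/ρ`.
-/

noncomputable section

open scoped BigOperators

namespace SSFinsler

/-- `k`-th standard basis vector of `ℝⁿ`. -/
def bvec (n : ℕ) (k : Fin n) : Fin n → ℝ := Pi.single k 1

/-- Standard inner product on `ℝⁿ`. -/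
def ip {n : ℕ} (x y : Fin n → ℝ) : ℝ := ∑ i, x i * y i

/-- Euclidean norm on `ℝⁿ`. -/
def nrm {n : ℕ} (y : Fin n → ℝ) : ℝ := Real.sqrt (ip y y)

/-- Partial derivative in the second variable of a function of `(r,s)`. -/
def psd (f : ℝ → ℝ → ℝ) (r s : ℝ) : ℝ := deriv (fun z => f r z) s

/-- The spherically symmetric metric `F(x,y) = |y| φ(|x|, ⟨x,y⟩/|y|)`. -/
def Fs {n : ℕ} (φ : ℝ → ℝ → ℝ) (x y : Fin n → ℝ) : ℝ :=
  nrm y * φ (nrm x) (ip x y / nrm y)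

/-- Fundamental tensor `g_{ij} := ½ ∂²(F²)/∂y^i∂y^j`. -/
def gs {n : ℕ} (φ : ℝ → ℝ → ℝ) (x y : Fin n → ℝ) (i j : Fin n) : ℝ :=
  (1/2) * fderiv ℝ (fun z => fderiv ℝ (fun w => (Fs φ x w)^2) z (bvec n j)) y (bvec n i)

/-- Cartan tensor `C_{ijk} := ½ ∂g_{ij}/∂y^k`. -/
def carts {n : ℕ} (φ : ℝ → ℝ → ℝ) (x y : Fin n → ℝ) (i j k : Fin n) : ℝ :=
  (1/2) * fderiv ℝ (fun z => gs φ x z i j) y (bvec n k)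

/-- Angular metric `h_{ij} := g_{ij} − F_{y^i}F_{y^j}`. -/
def angs {n : ℕ} (φ : ℝ → ℝ → ℝ) (x y : Fin n → ℝ) (i j : Fin n) : ℝ :=
  gs φ x y i j -
    fderiv ℝ (fun w => Fs φ x w) y (bvec n i) * fderiv ℝ (fun w => Fs φ x w) y (bvec n j)

/-- The fundamental tensor as a matrix. -/
def gsMat {n : ℕ} (φ : ℝ → ℝ → ℝ) (x y : Fin n → ℝ) : Matrix (Fin n) (Fin n) ℝ :=
  Matrix.of fun i j => gs φ x y i j

/-- The inverse fundamental tensor `g^{ij}`. -/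
def gsInv {n : ℕ} (φ : ℝ → ℝ → ℝ) (x y : Fin n → ℝ) : Matrix (Fin n) (Fin n) ℝ :=
  (gsMat φ x y)⁻¹

/-- Mean Cartan torsion `I_k := g^{jl} C_{jlk}`. -/
def mcis {n : ℕ} (φ : ℝ → ℝ → ℝ) (x y : Fin n → ℝ) (k : Fin n) : ℝ :=
  ∑ j, ∑ l, gsInv φ x y j l * carts φ x y j l k

/-- Squared norm `‖I‖² := g^{ij} I_i I_j` of the mean Cartan torsion. -/
def normI2s {n : ℕ} (φ : ℝ → ℝ → ℝ) (x y : Fin n → ℝ) : ℝ :=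
  ∑ i, ∑ j, gsInv φ x y i j * mcis φ x y i * mcis φ x y j

end SSFinsler

namespace SSFinsler

open Matrix

/-! ### Partial derivatives -/

/-- `f` is Fréchet differentiable at `y` with partial derivatives `D`. -/
def HasPartials {n : ℕ} (f : (Fin n → ℝ) → ℝ) (D : Fin n → ℝ) (y : Fin n → ℝ) : Prop :=
  ∃ f' : (Fin n → ℝ) →L[ℝ] ℝ, HasFDerivAt f f' y ∧ ∀ k, f' (bvec n k) = D k

namespace HasPartials

variable {n : ℕ} {f g : (Fin n → ℝ) → ℝ} {D E : Fin n → ℝ} {y : Fin n → ℝ}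

lemma fderiv_eq (h : HasPartials f D y) (k : Fin n) : fderiv ℝ f y (bvec n k) = D k := by
  obtain ⟨f', hf, hD⟩ := h
  rw [hf.fderiv, hD]

lemma congr_D (h : HasPartials f D y) (hE : ∀ k, D k = E k) : HasPartials f E y := by
  have : D = E := funext hE
  exact this ▸ h

lemma congr_of_ne (hy : y ≠ 0) (h : HasPartials f D y) (hg : ∀ z, z ≠ 0 → g z = f z) :
    HasPartials g D y := by
  obtain ⟨f', hf, hD⟩ := h
  refine ⟨f', hf.congr_of_eventuallyEq ?_, hD⟩
  filter_upwards [isOpen_ne.mem_nhds hy] with z hz using hg z hz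

lemma const (c : ℝ) : HasPartials (fun _ => c) (fun _ => 0) y :=
  ⟨0, hasFDerivAt_const c y, fun _ => rfl⟩

lemma add (hf : HasPartials f D y) (hg : HasPartials g E y) :
    HasPartials (fun z => f z + g z) (fun k => D k + E k) y := by
  obtain ⟨f', hf, hD⟩ := hf
  obtain ⟨g', hg, hE⟩ := hg
  exact ⟨f' + g', hf.add hg, fun k => by simp [hD, hE]⟩

lemma sub (hf : HasPartials f D y) (hg : HasPartials g E y) :
    HasPartials (fun z => f z - g z) (fun k => D k - E k) y := by
  obtain ⟨f', hf, hD⟩ := hf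
  obtain ⟨g', hg, hE⟩ := hg
  exact ⟨f' - g', hf.sub hg, fun k => by simp [hD, hE]⟩

lemma mul (hf : HasPartials f D y) (hg : HasPartials g E y) :
    HasPartials (fun z => f z * g z) (fun k => D k * g y + f y * E k) y := by
  obtain ⟨f', hf, hD⟩ := hf
  obtain ⟨g', hg, hE⟩ := hg
  exact ⟨_, hf.mul hg, fun k => by simp [hD, hE]; ring⟩

lemma comp {ψ : ℝ → ℝ} {ψ' : ℝ} (hψ : HasDerivAt ψ ψ' (f y)) (hf : HasPartials f D y) :
    HasPartials (fun z => ψ (f z)) (fun k => ψ' * D k) y := by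
  obtain ⟨f', hf, hD⟩ := hf
  exact ⟨_, hψ.comp_hasFDerivAt y hf, fun k => by simp [hD]⟩

lemma apply (i : Fin n) : HasPartials (fun z => z i) (fun k => if i = k then 1 else 0) y :=
  ⟨ContinuousLinearMap.proj i, hasFDerivAt_apply i y, fun k => by
    simp [bvec, Pi.single_apply]⟩

lemma sum {ι : Type*} (t : Finset ι) {f : ι → (Fin n → ℝ) → ℝ} {D : ι → Fin n → ℝ}
    (h : ∀ i, HasPartials (f i) (D i) y) :
    HasPartials (fun z => ∑ i ∈ t, f i z) (fun k => ∑ i ∈ t, D i k) y := by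
  choose f' hf hD using h
  refine ⟨∑ i ∈ t, f' i, ?_, fun k => by simp [hD]⟩
  exact HasFDerivAt.fun_sum fun i _ => hf i

end HasPartials

/-! ### The frame `l`, `m` and its derivatives -/

variable {n : ℕ}

lemma ip_self_pos {y : Fin n → ℝ} (hy : y ≠ 0) : 0 < ip y y := by
  obtain ⟨i, hi⟩ := Function.ne_iff.mp hy
  refine Finset.sum_pos' (fun j _ => mul_self_nonneg _) ⟨i, Finset.mem_univ _, ?_⟩
  exact mul_self_pos.mpr hi

lemma nrm_pos {y : Fin n → ℝ} (hy : y ≠ 0) : 0 < nrm y := Real.sqrt_pos.mpr (ip_self_pos hy)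

lemma ip_self_nonneg (y : Fin n → ℝ) : 0 ≤ ip y y :=
  Finset.sum_nonneg fun _ _ => mul_self_nonneg _

lemma nrm_sq (y : Fin n → ℝ) : nrm y ^ 2 = ip y y := Real.sq_sqrt (ip_self_nonneg y)

/-- The coordinate `s = ⟨x,y⟩/|y|`. -/
def sv (x y : Fin n → ℝ) : ℝ := ip x y / nrm y

/-- The unit vector `l = y/|y|`. -/
def lv (y : Fin n → ℝ) (i : Fin n) : ℝ := y i / nrm y

/-- The component `m = x - s l` of `x` orthogonal to `y`. -/
def mv (x y : Fin n → ℝ) (i : Fin n) : ℝ := x i - sv x y * lv y i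

/-- The projection `P = 1 - l lᵀ` onto the orthogonal complement of `y`. -/
def Pm (y : Fin n → ℝ) (i j : Fin n) : ℝ := (if i = j then 1 else 0) - lv y i * lv y j

lemma hp_nrm {y : Fin n → ℝ} (hy : y ≠ 0) : HasPartials nrm (lv y) y := by
  have h1 : HasPartials (fun z : Fin n → ℝ => ip z z) (fun k => 2 * y k) y := by
    refine (HasPartials.sum Finset.univ
      (fun i => (HasPartials.apply i).mul (HasPartials.apply i))).congr_D fun k => ?_
    simp [Finset.sum_add_distrib]
    ring
  refine (HasPartials.comp (f := fun z => ip z z)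
    (Real.hasDerivAt_sqrt (ip_self_pos hy).ne') h1).congr_D fun k => ?_
  have := nrm_pos hy
  simp only [lv]
  change 1 / (2 * nrm y) * _ = _
  field_simp

lemma hp_inv_nrm {y : Fin n → ℝ} (hy : y ≠ 0) :
    HasPartials (fun z => (nrm z)⁻¹) (fun k => -(lv y k) / nrm y ^ 2) y := by
  refine (HasPartials.comp (hasDerivAt_inv (nrm_pos hy).ne') (hp_nrm hy)).congr_D fun k => ?_
  ring

lemma hp_s (x : Fin n → ℝ) {y : Fin n → ℝ} (hy : y ≠ 0) :
    HasPartials (sv x) (fun k => mv x y k / nrm y) y := by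
  have h1 : HasPartials (fun z : Fin n → ℝ => ip x z) (fun k => x k) y := by
    refine (HasPartials.sum Finset.univ
      (fun i => (HasPartials.const (x i)).mul (HasPartials.apply i))).congr_D fun k => ?_
    simp
  refine (h1.mul (hp_inv_nrm hy)).congr_D fun k => ?_
  have := nrm_pos hy
  simp only [mv, sv]
  field_simp
  ring

lemma hp_l {y : Fin n → ℝ} (hy : y ≠ 0) (i : Fin n) :
    HasPartials (fun z => lv z i) (fun k => Pm y i k / nrm y) y := by
  refine ((HasPartials.apply i).mul (hp_inv_nrm hy)).congr_D fun k => ?_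
  have := nrm_pos hy
  simp only [Pm, lv]
  field_simp
  ring

lemma hp_m (x : Fin n → ℝ) {y : Fin n → ℝ} (hy : y ≠ 0) (i : Fin n) :
    HasPartials (fun z => mv x z i)
      (fun k => -(mv x y k * lv y i + sv x y * Pm y i k) / nrm y) y := by
  refine ((HasPartials.const (x i)).sub ((hp_s x hy).mul (hp_l hy i))).congr_D fun k => ?_
  ring

lemma hp_P {y : Fin n → ℝ} (hy : y ≠ 0) (i j : Fin n) :
    HasPartials (fun z => Pm z i j)
      (fun k => -(Pm y i k * lv y j + lv y i * Pm y j k) / nrm y) y := by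
  refine ((HasPartials.const _).sub ((hp_l hy i).mul (hp_l hy j))).congr_D fun k => ?_
  ring

lemma l_dot_l {y : Fin n → ℝ} (hy : y ≠ 0) : lv y ⬝ᵥ lv y = 1 := by
  have h : lv y ⬝ᵥ lv y = ip y y / nrm y ^ 2 := by
    simp only [dotProduct, ip, lv, Finset.sum_div]
    exact Finset.sum_congr rfl fun i _ => by ring
  rw [h, nrm_sq, div_self (ip_self_pos hy).ne']

lemma x_dot_l (x y : Fin n → ℝ) : x ⬝ᵥ lv y = sv x y := by
  simp only [dotProduct, sv, ip, lv, Finset.sum_div]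
  exact Finset.sum_congr rfl fun i _ => by ring

lemma mv_eq (x y : Fin n → ℝ) : mv x y = x - sv x y • lv y := by
  ext i
  simp [mv]

lemma m_dot_l (x : Fin n → ℝ) {y : Fin n → ℝ} (hy : y ≠ 0) : mv x y ⬝ᵥ lv y = 0 := by
  simp [mv_eq, sub_dotProduct, x_dot_l, l_dot_l hy]

lemma m_dot_m (x : Fin n → ℝ) {y : Fin n → ℝ} (hy : y ≠ 0) :
    mv x y ⬝ᵥ mv x y = nrm x ^ 2 - sv x y ^ 2 := by
  have hx : x ⬝ᵥ x = nrm x ^ 2 := by rw [nrm_sq]; rfl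
  simp [mv_eq, sub_dotProduct, dotProduct_sub, x_dot_l, l_dot_l hy, dotProduct_comm (lv y) x, hx]
  ring

/-! ### The fundamental and Cartan tensors -/

section Tensors

variable {φ : ℝ → ℝ → ℝ} {x : Fin n → ℝ} {f f1 f2 f3 : ℝ → ℝ}

lemma hp_Fsq (hf : φ (nrm x) = f) (h0 : ∀ t, HasDerivAt f (f1 t) t)
    {y : Fin n → ℝ} (hy : y ≠ 0) :
    HasPartials (fun w => (Fs φ x w) ^ 2)
      (fun k => 2 * (nrm y * (f (sv x y) ^ 2 * lv y k + f (sv x y) * f1 (sv x y) * mv x y k)))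
      y := by
  have hF := (hp_nrm hy).mul (HasPartials.comp (h0 _) (hp_s x hy))
  have hF2 := hF.mul hF
  refine (hF2.congr_of_ne hy (g := fun w => (Fs φ x w) ^ 2) fun z _ => ?_).congr_D fun k => ?_
  · simp only [Fs, hf, sv]
    ring
  · have := nrm_pos hy
    field_simp
    ring

/-- `g = φ² l lᵀ + φφ_s (l mᵀ + m lᵀ) + (φφ_s)_s m mᵀ + φσ₁ P`. -/
lemma gs_eq (hf : φ (nrm x) = f) (h0 : ∀ t, HasDerivAt f (f1 t) t)
    (h1 : ∀ t, HasDerivAt f1 (f2 t) t) {y : Fin n → ℝ} (hy : y ≠ 0) (i j : Fin n) :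
    gs φ x y i j = f (sv x y) * f (sv x y) * (lv y i * lv y j)
      + f (sv x y) * f1 (sv x y) * (lv y i * mv x y j + lv y j * mv x y i)
      + (f1 (sv x y) * f1 (sv x y) + f (sv x y) * f2 (sv x y)) * (mv x y i * mv x y j)
      + f (sv x y) * (f (sv x y) - sv x y * f1 (sv x y)) * Pm y i j := by
  have hs := hp_s x hy
  have c0 := HasPartials.comp (h0 _) hs
  have c1 := HasPartials.comp (h1 _) hs
  have hD := ((HasPartials.const 2).mul ((hp_nrm hy).mul
    (((c0.mul c0).mul (hp_l hy j)).add ((c0.mul c1).mul (hp_m x hy j))))).congr_of_ne hy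
    (g := fun z => fderiv ℝ (fun w => (Fs φ x w) ^ 2) z (bvec n j)) fun z hz => by
      rw [(hp_Fsq hf h0 hz).fderiv_eq j]; ring
  rw [gs, hD.fderiv_eq i]
  have hP : Pm y j i = Pm y i j := by simp only [Pm, eq_comm, mul_comm]
  have := nrm_pos hy
  rw [hP]
  field_simp
  ring

/-- `2u C = b'' m⊗m⊗m + (b - s b') Sym(P⊗m)` with `b = φφ_s`. -/
lemma carts_eq (hf : φ (nrm x) = f) (h0 : ∀ t, HasDerivAt f (f1 t) t)
    (h1 : ∀ t, HasDerivAt f1 (f2 t) t) (h2 : ∀ t, HasDerivAt f2 (f3 t) t)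
    {y : Fin n → ℝ} (hy : y ≠ 0) (i j k : Fin n) :
    carts φ x y i j k = 1 / (2 * nrm y) *
      ((3 * f1 (sv x y) * f2 (sv x y) + f (sv x y) * f3 (sv x y))
          * (mv x y i * mv x y j * mv x y k)
        + (f (sv x y) * f1 (sv x y)
            - sv x y * (f1 (sv x y) * f1 (sv x y) + f (sv x y) * f2 (sv x y)))
          * (Pm y i j * mv x y k + Pm y i k * mv x y j + Pm y j k * mv x y i)) := by
  have hs := hp_s x hy
  have c0 := HasPartials.comp (h0 _) hs
  have c1 := HasPartials.comp (h1 _) hs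
  have c2 := HasPartials.comp (h2 _) hs
  have li := hp_l hy i
  have lj := hp_l hy j
  have mi := hp_m x hy i
  have mj := hp_m x hy j
  have hD := (((((c0.mul c0).mul (li.mul lj)).add
    ((c0.mul c1).mul ((li.mul mj).add (lj.mul mi)))).add
    (((c1.mul c1).add (c0.mul c2)).mul (mi.mul mj))).add
    ((c0.mul (c0.sub (hs.mul c1))).mul (hp_P hy i j))).congr_of_ne hy
    (g := fun z => gs φ x z i j) fun z hz => gs_eq hf h0 h1 hz i j
  rw [carts, hD.fderiv_eq k]
  have := nrm_pos hy
  field_simp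
  ring

end Tensors

/-! ### Contraction with the inverse of `g` -/

section Contraction

variable {l m : Fin n → ℝ} {a b b' c w Δ : ℝ}

/-- The matrix `1 - l lᵀ`, which for a unit vector `l` projects orthogonally to `l`. -/
def projM (l : Fin n → ℝ) : Matrix (Fin n) (Fin n) ℝ := 1 - vecMulVec l l

/-- The shape of the fundamental tensor in the frame `l`, `m`. -/
def shape (l m : Fin n → ℝ) (a b b' c : ℝ) : Matrix (Fin n) (Fin n) ℝ :=
  a • vecMulVec l l + b • (vecMulVec l m + vecMulVec m l) + b' • vecMulVec m m + c • projM l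

lemma shape_mulVec (l m v : Fin n → ℝ) :
    shape l m a b b' c *ᵥ v = (a * (l ⬝ᵥ v) + b * (m ⬝ᵥ v) - c * (l ⬝ᵥ v)) • l
      + (b * (l ⬝ᵥ v) + b' * (m ⬝ᵥ v)) • m + c • v := by
  ext i
  simp [shape, projM, add_mulVec, sub_mulVec, smul_mulVec, vecMulVec_mulVec]
  ring

lemma inv_mulVec_of (hg : IsUnit (shape l m a b b' c).det)
    {v z : Fin n → ℝ} (h : shape l m a b b' c *ᵥ v = z) :
    (shape l m a b b' c)⁻¹ *ᵥ z = v := by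
  rw [← h, mulVec_mulVec, nonsing_inv_mul _ hg, one_mulVec]

lemma inv_mulVec_m (hg : IsUnit (shape l m a b b' c).det) (hll : l ⬝ᵥ l = 1) (hml : m ⬝ᵥ l = 0)
    (hmm : m ⬝ᵥ m = w) (hΔ : a * (c + b' * w) - b ^ 2 * w = Δ) (hΔ0 : Δ ≠ 0) :
    (shape l m a b b' c)⁻¹ *ᵥ m = (a / Δ) • m - (b * w / Δ) • l := by
  have hlm : l ⬝ᵥ m = 0 := by rw [dotProduct_comm, hml]
  apply inv_mulVec_of hg
  rw [shape_mulVec]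
  ext i
  simp [dotProduct_sub, hll, hml, hlm, hmm]
  field_simp
  rw [← hΔ]
  ring

lemma inv_mulVec_l (hg : IsUnit (shape l m a b b' c).det) (hll : l ⬝ᵥ l = 1) (hml : m ⬝ᵥ l = 0)
    (hmm : m ⬝ᵥ m = w) (hΔ : a * (c + b' * w) - b ^ 2 * w = Δ) (hΔ0 : Δ ≠ 0) :
    (shape l m a b b' c)⁻¹ *ᵥ l = ((c + b' * w) / Δ) • l - (b / Δ) • m := by
  have hlm : l ⬝ᵥ m = 0 := by rw [dotProduct_comm, hml]
  apply inv_mulVec_of hg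
  rw [shape_mulVec]
  ext i
  simp [dotProduct_sub, hll, hml, hlm, hmm]
  field_simp
  rw [← hΔ]
  ring

/-- Obtained by expanding `tr(g⁻¹g) = n`. -/
lemma trace_inv_P (hg : IsUnit (shape l m a b b' c).det) (hll : l ⬝ᵥ l = 1) (hml : m ⬝ᵥ l = 0)
    (hmm : m ⬝ᵥ m = w) (hΔ : a * (c + b' * w) - b ^ 2 * w = Δ) (hΔ0 : Δ ≠ 0) :
    c * ((shape l m a b b' c)⁻¹ * projM l).trace
      = n - (a * (c + b' * w) - 2 * b ^ 2 * w + b' * a * w) / Δ := by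
  have hlm : l ⬝ᵥ m = 0 := by rw [dotProduct_comm, hml]
  have h := congrArg trace (nonsing_inv_mul _ hg)
  have em := inv_mulVec_m hg hll hml hmm hΔ hΔ0
  have el := inv_mulVec_l hg hll hml hmm hΔ hΔ0
  generalize (shape l m a b b' c)⁻¹ = G at *
  rw [shape] at h
  simp only [Matrix.mul_add, Matrix.mul_smul, trace_add, trace_smul, mul_vecMulVec, trace_vecMulVec,
    em, el, trace_one, Fintype.card_fin, sub_dotProduct, smul_dotProduct, hll, hml, hlm, hmm,
    smul_eq_mul] at h
  rw [← sub_eq_zero] at h ⊢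
  rw [← h]
  ring

lemma shape_transpose (l m : Fin n → ℝ) : (shape l m a b b' c)ᵀ = shape l m a b b' c := by
  ext i j
  simp [shape, projM, vecMulVec_apply, one_apply, eq_comm (a := i) (b := j)]
  ring

lemma projM_symm (l : Fin n → ℝ) (i j : Fin n) : projM l i j = projM l j i := by
  simp [projM, vecMulVec_apply, one_apply, eq_comm (a := i) (b := j), mul_comm]

lemma projM_mulVec (l v : Fin n → ℝ) : projM l *ᵥ v = v - (l ⬝ᵥ v) • l := by
  ext i
  simp [projM, sub_mulVec, vecMulVec_mulVec]

/-- The trace of a tensor of the shape of the Cartan tensor with respect to a symmetric matrix. -/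
lemma contract {G P : Matrix (Fin n) (Fin n) ℝ} (hG : ∀ i j, G i j = G j i)
    (hP : ∀ i j, P i j = P j i) (m : Fin n → ℝ) (κ β γ : ℝ) (k : Fin n) :
    ∑ j, ∑ l, G j l * (κ * (β * (m j * m l * m k)
        + γ * (P j l * m k + P j k * m l + P l k * m j)))
      = κ * (β * (m ⬝ᵥ G *ᵥ m) * m k
        + γ * ((G * P).trace * m k + 2 * (P *ᵥ (G *ᵥ m)) k)) := by
  have hA : ∑ j, ∑ l, G j l * (m j * m l) = m ⬝ᵥ G *ᵥ m := by
    simp only [dotProduct, mulVec, Finset.mul_sum]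
    exact Finset.sum_congr rfl fun i _ => Finset.sum_congr rfl fun j _ => by ring
  have hB : ∑ j, ∑ l, G j l * P j l = (G * P).trace := by
    simp only [trace, diag_apply, mul_apply]
    exact Finset.sum_congr rfl fun i _ => Finset.sum_congr rfl fun j _ => by rw [hP]
  have hC : ∑ j, ∑ l, G j l * (P j k * m l) = (P *ᵥ (G *ᵥ m)) k := by
    simp only [dotProduct, mulVec, Finset.mul_sum]
    exact Finset.sum_congr rfl fun i _ => Finset.sum_congr rfl fun j _ => by
      rw [hP i k]; ring
  have hD : ∑ j, ∑ l, G j l * (P l k * m j) = (P *ᵥ (G *ᵥ m)) k := by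
    rw [← hC, Finset.sum_comm]
    exact Finset.sum_congr rfl fun i _ => Finset.sum_congr rfl fun j _ => by rw [hG]
  rw [two_mul]
  nth_rewrite 1 [← hC]
  rw [← hA, ← hB, ← hD]
  simp only [Finset.mul_sum, Finset.sum_mul, ← Finset.sum_add_distrib]
  exact Finset.sum_congr rfl fun i _ => Finset.sum_congr rfl fun j _ => by ring

end Contraction

end SSFinsler

open Matrix

open SSFinsler in
/-- The norm of the mean Cartan torsion of a spherically
symmetric metric `F = uφ(r,s)` (`u = |y|`, `r = |x|`, `s = ⟨x,y⟩/|y|`). -/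
theorem normI_formula_spherically_symmetric
    {n : ℕ} (hn : 3 ≤ n) (φ : ℝ → ℝ → ℝ)
    (hφ : ContDiff ℝ (⊤ : ℕ∞) (fun p : ℝ × ℝ => φ p.1 p.2))
    (x y : Fin n → ℝ) (hy : y ≠ 0)
    (hposdef : (gsMat φ x y).PosDef)
    (hφpos : 0 < φ (nrm x) (ip x y / nrm y))
    (hσ1 : φ (nrm x) (ip x y / nrm y) -
        (ip x y / nrm y) * psd φ (nrm x) (ip x y / nrm y) ≠ 0)
    (hρ : 0 < φ (nrm x) (ip x y / nrm y) *
        ((φ (nrm x) (ip x y / nrm y) -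
            (ip x y / nrm y) * psd φ (nrm x) (ip x y / nrm y)) +
          ((nrm x) ^ 2 - (ip x y / nrm y) ^ 2) *
            psd (psd φ) (nrm x) (ip x y / nrm y))) :
    Real.sqrt (normI2s φ x y) =
      let u := nrm y
      let r := nrm x
      let s := ip x y / nrm y
      let p := φ r s
      let ps := psd φ r s
      let pss := psd (psd φ) r s
      let psss := psd (psd (psd φ)) r s
      let σ1 := p - s * ps
      let ρ := p * (σ1 + (r ^ 2 - s ^ 2) * pss)
      |(((n : ℝ) + 1) * (σ1 * ps - s * p * pss) * (σ1 + (r ^ 2 - s ^ 2) * pss) +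
            (r ^ 2 - s ^ 2) * (σ1 * psss + 3 * s * pss ^ 2) * p) / (2 * u * σ1 * ρ)| *
        Real.sqrt ((r ^ 2 - s ^ 2) / ρ) := by
  classical
  -- Derivatives of `φ(r, ·)` at the fixed radius `r = |x|`.
  have hsm : ContDiff ℝ (⊤ : ℕ∞) (φ (nrm x)) :=
    hφ.comp (contDiff_const.prodMk contDiff_id)
  have hsm1 : ContDiff ℝ (⊤ : ℕ∞) (psd φ (nrm x)) := by
    have := (contDiff_infty_iff_deriv.mp hsm).2
    exact this
  have hsm2 : ContDiff ℝ (⊤ : ℕ∞) (psd (psd φ) (nrm x)) := by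
    have := (contDiff_infty_iff_deriv.mp hsm1).2
    exact this
  have h0 : ∀ t, HasDerivAt (φ (nrm x)) (psd φ (nrm x) t) t := fun t =>
    ((contDiff_infty_iff_deriv.mp hsm).1 t).hasDerivAt
  have h1 : ∀ t, HasDerivAt (psd φ (nrm x)) (psd (psd φ) (nrm x) t) t := fun t =>
    ((contDiff_infty_iff_deriv.mp hsm1).1 t).hasDerivAt
  have h2 : ∀ t, HasDerivAt (psd (psd φ) (nrm x)) (psd (psd (psd φ)) (nrm x) t) t := fun t =>
    ((contDiff_infty_iff_deriv.mp hsm2).1 t).hasDerivAt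
  have hgs := gs_eq (x := x) rfl h0 h1 hy
  have hC := carts_eq (x := x) rfl h0 h1 h2 hy
  have hu := nrm_pos hy
  have hll := l_dot_l hy
  have hml := m_dot_l x hy
  have hmm := m_dot_m x hy
  change φ (nrm x) (sv x y) - sv x y * psd φ (nrm x) (sv x y) ≠ 0 at hσ1
  change 0 < φ (nrm x) (sv x y) at hφpos
  change 0 < φ (nrm x) (sv x y) * ((φ (nrm x) (sv x y) - sv x y * psd φ (nrm x) (sv x y))
    + (nrm x ^ 2 - sv x y ^ 2) * psd (psd φ) (nrm x) (sv x y)) at hρ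
  change _ = |(((n : ℝ) + 1) * ((φ (nrm x) (sv x y) - sv x y * psd φ (nrm x) (sv x y))
    * psd φ (nrm x) (sv x y) - sv x y * φ (nrm x) (sv x y) * psd (psd φ) (nrm x) (sv x y))
    * ((φ (nrm x) (sv x y) - sv x y * psd φ (nrm x) (sv x y))
      + (nrm x ^ 2 - sv x y ^ 2) * psd (psd φ) (nrm x) (sv x y))
    + (nrm x ^ 2 - sv x y ^ 2) * ((φ (nrm x) (sv x y) - sv x y * psd φ (nrm x) (sv x y))
      * psd (psd (psd φ)) (nrm x) (sv x y) + 3 * sv x y * psd (psd φ) (nrm x) (sv x y) ^ 2)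
      * φ (nrm x) (sv x y))
    / (2 * nrm y * (φ (nrm x) (sv x y) - sv x y * psd φ (nrm x) (sv x y))
      * (φ (nrm x) (sv x y) * ((φ (nrm x) (sv x y) - sv x y * psd φ (nrm x) (sv x y))
      + (nrm x ^ 2 - sv x y ^ 2) * psd (psd φ) (nrm x) (sv x y))))|
    * Real.sqrt ((nrm x ^ 2 - sv x y ^ 2)
      / (φ (nrm x) (sv x y) * ((φ (nrm x) (sv x y) - sv x y * psd φ (nrm x) (sv x y))
      + (nrm x ^ 2 - sv x y ^ 2) * psd (psd φ) (nrm x) (sv x y))))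
  have hmat : gsMat φ x y = shape (lv y) (mv x y) (φ (nrm x) (sv x y) * φ (nrm x) (sv x y))
      (φ (nrm x) (sv x y) * psd φ (nrm x) (sv x y))
      (psd φ (nrm x) (sv x y) * psd φ (nrm x) (sv x y)
        + φ (nrm x) (sv x y) * psd (psd φ) (nrm x) (sv x y))
      (φ (nrm x) (sv x y) * (φ (nrm x) (sv x y) - sv x y * psd φ (nrm x) (sv x y))) := by
    ext i j
    simp [gsMat, hgs, shape, projM, Pm, Matrix.vecMulVec_apply, Matrix.one_apply]
    ring
  have hdet : IsUnit (gsMat φ x y).det := hposdef.det_pos.ne'.isUnit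
  have hPm : ∀ i j, Pm y i j = projM (lv y) i j := fun i j => by
    simp [Pm, projM, Matrix.vecMulVec_apply, Matrix.one_apply]
  simp only [hPm] at hC
  rw [hmat] at hdet
  have hI : ∀ k, mcis φ x y k = ∑ j, ∑ l, gsInv φ x y j l * carts φ x y j l k := fun k => rfl
  have hN : normI2s φ x y
      = ∑ i, ∑ j, gsInv φ x y i j * mcis φ x y i * mcis φ x y j := rfl
  have hinv : gsInv φ x y = (gsMat φ x y)⁻¹ := rfl
  rw [hmat] at hinv
  simp only [hC, hinv] at hI
  rw [hinv] at hN
  clear hinv hmat hC hgs h0 h1 h2 hsm hsm1 hsm2 hφ hposdef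
  generalize φ (nrm x) (sv x y) = p at *
  generalize psd φ (nrm x) (sv x y) = p1 at *
  generalize psd (psd φ) (nrm x) (sv x y) = p2 at *
  generalize psd (psd (psd φ)) (nrm x) (sv x y) = p3 at *
  generalize mcis φ x y = I at *
  generalize sv x y = s at *
  generalize hw : nrm x ^ 2 - s ^ 2 = w at *
  generalize hσ : p - s * p1 = σ at *
  generalize hA : σ + w * p2 = A at *
  have hΔ : p * p * (p * σ + (p1 * p1 + p * p2) * w) - (p * p1) ^ 2 * w = p ^ 3 * A := by
    rw [← hA]; ring
  have hA0 : A ≠ 0 := fun h => by simp [h] at hρ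
  have hp0 : p ≠ 0 := hφpos.ne'
  have hΔ0 : p ^ 3 * A ≠ 0 := mul_ne_zero (pow_ne_zero _ hp0) hA0
  have em := inv_mulVec_m hdet hll hml hmm hΔ hΔ0
  have tr := trace_inv_P hdet hll hml hmm hΔ hΔ0
  have hsymm : ∀ i j, (shape (lv y) (mv x y) (p * p) (p * p1) (p1 * p1 + p * p2) (p * σ))⁻¹ i j
      = (shape (lv y) (mv x y) (p * p) (p * p1) (p1 * p1 + p * p2) (p * σ))⁻¹ j i := by
    intro i j
    conv_rhs => rw [← shape_transpose, ← Matrix.transpose_nonsing_inv, Matrix.transpose_apply]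
  generalize (shape (lv y) (mv x y) (p * p) (p * p1) (p1 * p1 + p * p2) (p * σ))⁻¹ = G at *
  have hlm : lv y ⬝ᵥ mv x y = 0 := by rw [dotProduct_comm, hml]
  have hmGm : mv x y ⬝ᵥ G *ᵥ mv x y = w / (p * A) := by
    rw [em]
    simp [dotProduct_sub, hmm, hml]
    field_simp
  have hPe : projM (lv y) *ᵥ (G *ᵥ mv x y) = (1 / (p * A)) • mv x y := by
    rw [projM_mulVec, em]
    ext i
    simp only [dotProduct_sub, dotProduct_smul, hll, hlm, Pi.sub_apply, Pi.smul_apply, smul_eq_mul]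
    field_simp
    ring
  have hT : (G * projM (lv y)).trace =
      (n - (p * p * (p * σ + (p1 * p1 + p * p2) * w) - 2 * (p * p1) ^ 2 * w
      + (p1 * p1 + p * p2) * (p * p) * w) / (p ^ 3 * A)) / (p * σ) := by
    rw [← tr]; field_simp
  -- The mean Cartan torsion is a multiple of `m`.
  have hIk : ∀ k, I k = (((n : ℝ) + 1) * (σ * p1 - s * p * p2) * A
      + w * (σ * p3 + 3 * s * p2 ^ 2) * p) / (2 * nrm y * σ * (p * A)) * mv x y k := by
    intro k
    rw [hI, contract hsymm (projM_symm _), hmGm, hPe, hT]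
    simp only [Pi.smul_apply, smul_eq_mul]
    field_simp
    rw [← hA]
    have hp1 : p = σ + s * p1 := by rw [← hσ]; ring
    rw [hp1]
    ring
  generalize (((n : ℝ) + 1) * (σ * p1 - s * p * p2) * A
      + w * (σ * p3 + 3 * s * p2 ^ 2) * p) / (2 * nrm y * σ * (p * A)) = Q at *
  have hfin : normI2s φ x y = Q ^ 2 * (w / (p * A)) := by
    rw [hN, ← hmGm]
    simp only [hIk, dotProduct, Matrix.mulVec, Finset.mul_sum]
    exact Finset.sum_congr rfl fun i _ => Finset.sum_congr rfl fun j _ => by ring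
  rw [hfin, Real.sqrt_mul (sq_nonneg _), Real.sqrt_sq_eq_abs]
end
end

section
/- For all real numbers r, s with |s| < r < 1, one has −s·(s + √(1 − r² + s²))/(1 − r²) ≤ (1 + s²)/(2·(1 + √(1 − r²))). -/
/-!
Put `u = √(1 - r²)` and `w = √(1 - r² + s²)`, so that `u² = (w - s) * (w + s)` with `w > |s|`.
The left-hand side is then `-s / (w - s)`, and clearing denominators leaves
`-s * (2 * (1 + u)) ≤ (1 + s²) * (w - s)`. After multiplication by `w - s > 0` the difference of the
two sides is the perfect square `(s * (w - s) + u)²`.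
-/

/-- For `|s| < r < 1`,
`−s(s + √(1−r²+s²))/(1−r²) ≤ (1+s²)/(2(1+√(1−r²)))`. -/
theorem berwald_bound_aux_le (r s : ℝ) (h1 : |s| < r) (h2 : r < 1) :
    -s * (s + Real.sqrt (1 - r ^ 2 + s ^ 2)) / (1 - r ^ 2) ≤
      (1 + s ^ 2) / (2 * (1 + Real.sqrt (1 - r ^ 2))) := by
  have hr : 0 < 1 - r ^ 2 := by nlinarith [abs_nonneg s]
  have hu : Real.sqrt (1 - r ^ 2) ^ 2 = 1 - r ^ 2 := Real.sq_sqrt hr.le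
  have hw : Real.sqrt (1 - r ^ 2 + s ^ 2) ^ 2 = 1 - r ^ 2 + s ^ 2 :=
    Real.sq_sqrt (by positivity)
  have hws : s < Real.sqrt (1 - r ^ 2 + s ^ 2) := Real.lt_sqrt_of_sq_lt (by linarith)
  have hu0 : 0 ≤ Real.sqrt (1 - r ^ 2) := Real.sqrt_nonneg _
  set u := Real.sqrt (1 - r ^ 2)
  set w := Real.sqrt (1 - r ^ 2 + s ^ 2)
  have hd : 0 < w - s := sub_pos.mpr hws
  have hL : -s * (s + w) / (1 - r ^ 2) = -s / (w - s) := by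
    rw [div_eq_div_iff hr.ne' hd.ne']
    linear_combination -s * hw
  rw [hL, div_le_div_iff₀ hd (by positivity)]
  refine le_of_mul_le_mul_right ?_ hd
  have key : (1 + s ^ 2) * (w - s) * (w - s) - -s * (2 * (1 + u)) * (w - s)
      = (s * (w - s) + u) ^ 2 := by
    linear_combination hw - hu
  linarith [sq_nonneg (s * (w - s) + u)]
end

section
/- For all real numbers r, s with |s| < r < 1, one has −s·(s + √(1 − r² + s²))/((1 − r²)·(1 + 2(r² − s²))) < (1 + r²)/(2·(1 + √(1 − r²))). -/
/-!
Both sides are compared with `r / (1 + r)`, the value of the left side at `s = -r`.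

* Left side: `-s (s + √(1 - r² + s²)) ≤ r (1 - r)`, because
  `(r (1 - r) + s²)² - s² (1 - r² + s²) = (1 - r)² (r² - s²) ≥ 0`. The factor
  `1 + 2 (r² - s²) > 1` makes the resulting bound strict.
* Right side: AM-GM for `1 - r` and `r² (1 + r)` gives
  `2 r √(1 - r²) ≤ (1 - r) + r² (1 + r)`, that is, `2 r (1 + √(1 - r²)) ≤ (1 + r) (1 + r²)`.
  Equality holds where `r³ + r² + r = 1`, so this estimate leaves no slack.
-/

theorem berwald_numerator_le (r s : ℝ) (h1 : |s| < r) (h2 : r < 1) :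
    -s * (s + Real.sqrt (1 - r ^ 2 + s ^ 2)) ≤ r * (1 - r) := by
  have hr : 0 < r := (abs_nonneg s).trans_lt h1
  have hs : s ^ 2 < r ^ 2 := sq_lt_sq' (abs_lt.mp h1).1 (abs_lt.mp h1).2
  have hr2 : r ^ 2 < 1 := by nlinarith
  have hw := Real.sq_sqrt (show 0 ≤ 1 - r ^ 2 + s ^ 2 by nlinarith [sq_nonneg s])
  have hB : 0 ≤ r * (1 - r) + s ^ 2 := by nlinarith [sq_nonneg s]
  have key : -s * Real.sqrt (1 - r ^ 2 + s ^ 2) ≤ r * (1 - r) + s ^ 2 := by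
    refine le_of_abs_le <| abs_le_of_sq_le_sq ?_ hB
    rw [mul_pow, hw]
    nlinarith [mul_nonneg (sq_nonneg (1 - r)) (sub_pos.mpr hs).le]
  linarith

theorem berwald_amgm (r : ℝ) (hr : 0 < r) (h2 : r < 1) :
    2 * r * (1 + Real.sqrt (1 - r ^ 2)) ≤ (1 + r) * (1 + r ^ 2) := by
  have ha := Real.sq_sqrt (show 0 ≤ 1 - r ^ 2 by nlinarith)
  have key : 2 * r * Real.sqrt (1 - r ^ 2) ≤ (1 - r) + r ^ 2 * (1 + r) := by
    refine le_of_abs_le <| abs_le_of_sq_le_sq ?_ (by nlinarith [mul_pos (pow_pos hr 2) hr, sq_nonneg r])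
    rw [mul_pow, ha]
    nlinarith [sq_nonneg ((1 - r) - r ^ 2 * (1 + r))]
  linarith

/-- For `|s| < r < 1`,
`−s(s + √(1−r²+s²))/((1−r²)(1+2(r²−s²))) < (1+r²)/(2(1+√(1−r²)))`. -/
theorem berwald_bound_aux_lt (r s : ℝ) (h1 : |s| < r) (h2 : r < 1) :
    -s * (s + Real.sqrt (1 - r ^ 2 + s ^ 2)) /
        ((1 - r ^ 2) * (1 + 2 * (r ^ 2 - s ^ 2))) <
      (1 + r ^ 2) / (2 * (1 + Real.sqrt (1 - r ^ 2))) := by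
  have hr : 0 < r := (abs_nonneg s).trans_lt h1
  have hs : s ^ 2 < r ^ 2 := sq_lt_sq' (abs_lt.mp h1).1 (abs_lt.mp h1).2
  have hr2 : 0 < 1 - r ^ 2 := by nlinarith
  have hD : 0 < (1 - r ^ 2) * (1 + 2 * (r ^ 2 - s ^ 2)) := mul_pos hr2 (by linarith)
  have ha := Real.sqrt_nonneg (1 - r ^ 2)
  calc _ < r / (1 + r) := by
        rw [div_lt_div_iff₀ hD (by linarith)]
        have hn := mul_le_mul_of_nonneg_right (berwald_numerator_le r s h1 h2)
          (show 0 ≤ 1 + r by linarith)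
        have hp := mul_pos (mul_pos hr hr2) (sub_pos.mpr hs)
        nlinarith
    _ ≤ _ := by
        rw [div_le_div_iff₀ (by linarith) (by linarith)]
        linarith [berwald_amgm r hr h2]
end

section
/- Let r, s be real numbers with |s| < r < 1 and let u > 0, n = 2. Define φ(r,s) := (√(1−r²+s²) + s)²/((1−r²)²·√(1−r²+s²)), and let φ_s, φ_ss, φ_sss denote its first, second and third partial derivatives in s. Set σ₁ := φ − sφ_s and ρ := φ·(σ₁ + (r²−s²)φ_ss). Then ρ > 0 and |[(n+1)(σ₁φ_s − sφφ_ss)(σ₁ + (r²−s²)φ_ss) + (r²−s²)(σ₁φ_sss + 3sφ_ss²)φ]/(2uσ₁ρ)|·√((r²−s²)/ρ) = (3/(uφ))·|1 − s(s + √(1−r²+s²))/((1−r²)(1 + 2(r²−s²)))|·√((r²−s²)/(1 + 2(r²−s²))). -/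
/-!
Write `c = 1 - r²` and `t = √(c + s²)`, so that `c = (t - s)(t + s)` and `dt/ds = s / t`.
Everything becomes rational in `s` and `t`: `φ = (t + s)² / (c² t) = 1 / ((t - s)² t)`, and
differentiating gives
`φ_s = (2t - s) φ / t²`, `φ_ss = 3 / t⁵`, `φ_sss = -15 s / t⁷`.
Hence `σ₁ = 1 / t³` and, as `r² - s² = 1 - t²`, also `ρ = φ (3 - 2t²) / t⁵`, which is positive
because `t² < 1`. The factor `t⁵ / φ = (t³ (t - s))²` is a perfect square, so it leaves the square
root, and the claim reduces to an identity of rational functions in `s` and `t`.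
-/

/-- The derivative of `√(c + s²)` in `s` is `s / √(c + s²)`. -/
lemma berwald_hasDerivAt_sqrt {c : ℝ} (hc : 0 < c) (z : ℝ) :
    HasDerivAt (fun w : ℝ => Real.sqrt (c + w ^ 2)) (z / Real.sqrt (c + z ^ 2)) z := by
  have hpos : 0 < c + z ^ 2 := by positivity
  have h : HasDerivAt (fun w : ℝ => c + w ^ 2) (2 * z) z := by
    simpa using (hasDerivAt_pow 2 z).const_add c
  convert h.sqrt hpos.ne' using 1
  have := (Real.sqrt_pos.2 hpos).ne'
  field_simp

lemma berwald_hasDerivAt_phi {c : ℝ} (hc : 0 < c) (z : ℝ) :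
    HasDerivAt (fun w : ℝ => (Real.sqrt (c + w ^ 2) + w) ^ 2 / (c ^ 2 * Real.sqrt (c + w ^ 2)))
      ((Real.sqrt (c + z ^ 2) + z) ^ 2 * (2 * Real.sqrt (c + z ^ 2) - z) /
        (c ^ 2 * Real.sqrt (c + z ^ 2) ^ 3)) z := by
  have ht : 0 < Real.sqrt (c + z ^ 2) := Real.sqrt_pos.2 (by positivity)
  have hd := berwald_hasDerivAt_sqrt hc z
  refine (((hd.add (hasDerivAt_id z)).pow 2).div (hd.const_mul (c ^ 2))
    (by positivity)).congr_deriv ?_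
  simp only [Pi.add_apply, Pi.pow_apply, id]
  generalize Real.sqrt (c + z ^ 2) = t at ht ⊢
  field_simp
  push_cast
  ring

/-- In the second derivative `(t + s)² (t - s)²` cancels against `c²`, leaving `3 / t⁵`. -/
lemma berwald_hasDerivAt_phi_s {c : ℝ} (hc : 0 < c) (z : ℝ) :
    HasDerivAt (fun w : ℝ => (Real.sqrt (c + w ^ 2) + w) ^ 2 * (2 * Real.sqrt (c + w ^ 2) - w) /
        (c ^ 2 * Real.sqrt (c + w ^ 2) ^ 3))
      (3 / Real.sqrt (c + z ^ 2) ^ 5) z := by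
  have ht : 0 < Real.sqrt (c + z ^ 2) := Real.sqrt_pos.2 (by positivity)
  have hsq : Real.sqrt (c + z ^ 2) ^ 2 = c + z ^ 2 := Real.sq_sqrt (by positivity)
  have hd := berwald_hasDerivAt_sqrt hc z
  refine ((((hd.add (hasDerivAt_id z)).pow 2).mul ((hd.const_mul 2).sub (hasDerivAt_id z))).div
    ((hd.pow 3).const_mul (c ^ 2))
    (by simp only [Pi.pow_apply]; positivity)).congr_deriv ?_
  simp only [Pi.add_apply, Pi.pow_apply, Pi.mul_apply, Pi.sub_apply, id]
  generalize Real.sqrt (c + z ^ 2) = t at ht hsq ⊢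
  obtain rfl : c = t ^ 2 - z ^ 2 := by linarith
  field_simp
  push_cast
  ring

lemma berwald_hasDerivAt_phi_ss {c : ℝ} (hc : 0 < c) (z : ℝ) :
    HasDerivAt (fun w : ℝ => 3 / Real.sqrt (c + w ^ 2) ^ 5)
      (-15 * z / Real.sqrt (c + z ^ 2) ^ 7) z := by
  have ht : 0 < Real.sqrt (c + z ^ 2) := Real.sqrt_pos.2 (by positivity)
  have hd := berwald_hasDerivAt_sqrt hc z
  refine ((hasDerivAt_const z (3 : ℝ)).div (hd.pow 5)
    (by simp only [Pi.pow_apply]; positivity)).congr_deriv ?_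
  simp only [Pi.pow_apply]
  generalize Real.sqrt (c + z ^ 2) = t at ht ⊢
  field_simp
  push_cast
  ring

/-- For the generating function `φ` of Berwald's projectively
flat metric `F = uφ(r,s)` on the unit disc, the general two-dimensional
(`n = 2`) formula for the norm of the mean Cartan torsion evaluates in closed
form; moreover the quantity `ρ` appearing in it is positive. -/
theorem berwald_normI_closed_form (r s u : ℝ) (h1 : |s| < r) (h2 : r < 1)
    (hu : 0 < u) (n : ℕ) (hn : n = 2) :
    let φ : ℝ → ℝ → ℝ := fun r' s' =>
      (Real.sqrt (1 - r' ^ 2 + s' ^ 2) + s') ^ 2 /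
        ((1 - r' ^ 2) ^ 2 * Real.sqrt (1 - r' ^ 2 + s' ^ 2))
    let φs := deriv (fun z => φ r z) s
    let φss := deriv (fun z => deriv (fun w => φ r w) z) s
    let φsss := deriv (fun z => deriv (fun w => deriv (fun w' => φ r w') w) z) s
    let σ1 := φ r s - s * φs
    let ρ := φ r s * (σ1 + (r ^ 2 - s ^ 2) * φss)
    0 < ρ ∧
      |(((n : ℝ) + 1) * (σ1 * φs - s * φ r s * φss) * (σ1 + (r ^ 2 - s ^ 2) * φss) +
            (r ^ 2 - s ^ 2) * (σ1 * φsss + 3 * s * φss ^ 2) * φ r s) /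
          (2 * u * σ1 * ρ)| * Real.sqrt ((r ^ 2 - s ^ 2) / ρ) =
        3 / (u * φ r s) *
            |1 - s * (s + Real.sqrt (1 - r ^ 2 + s ^ 2)) /
                ((1 - r ^ 2) * (1 + 2 * (r ^ 2 - s ^ 2)))| *
          Real.sqrt ((r ^ 2 - s ^ 2) / (1 + 2 * (r ^ 2 - s ^ 2))) := by
  intro φ φs φss φsss σ1 ρ
  have hr : 0 < r := (abs_nonneg s).trans_lt h1
  have hc : 0 < 1 - r ^ 2 := by nlinarith
  have hsr : s ^ 2 < r ^ 2 := sq_lt_sq' (abs_lt.1 h1).1 (abs_lt.1 h1).2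
  have e1 : (fun z => deriv (fun w => φ r w) z) = _ :=
    funext fun z => (berwald_hasDerivAt_phi hc z).deriv
  have e2 : (fun z => deriv (fun w => deriv (fun w' => φ r w') w) z) =
      fun z => 3 / Real.sqrt (1 - r ^ 2 + z ^ 2) ^ 5 := by
    rw [e1]
    exact funext fun z => (berwald_hasDerivAt_phi_s hc z).deriv
  have hs1 : φs = _ := (berwald_hasDerivAt_phi hc s).deriv
  have hs2 : φss = _ := congrFun e2 s
  have hs3 : φsss = -15 * s / Real.sqrt (1 - r ^ 2 + s ^ 2) ^ 7 := by
    change deriv (fun z => deriv (fun w => deriv (fun w' => φ r w') w) z) s = _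
    rw [e2]
    exact (berwald_hasDerivAt_phi_ss hc s).deriv
  have hφ : φ r s = (Real.sqrt (1 - r ^ 2 + s ^ 2) + s) ^ 2 /
      ((1 - r ^ 2) ^ 2 * Real.sqrt (1 - r ^ 2 + s ^ 2)) := rfl
  have hσ : σ1 = φ r s - s * φs := rfl
  have hρ : ρ = φ r s * (σ1 + (r ^ 2 - s ^ 2) * φss) := rfl
  have ht : 0 < Real.sqrt (1 - r ^ 2 + s ^ 2) := Real.sqrt_pos.2 (by positivity)
  have hsq : Real.sqrt (1 - r ^ 2 + s ^ 2) ^ 2 = 1 - r ^ 2 + s ^ 2 :=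
    Real.sq_sqrt (by positivity)
  clear_value ρ σ1 φsss φss φs
  generalize φ r s = f at *
  clear e1 e2
  clear φ
  generalize Real.sqrt (1 - r ^ 2 + s ^ 2) = t at *
  have hst : |s| < t := abs_lt_of_sq_lt_sq (by linarith) ht.le
  have hq : 0 < t - s := by linarith [(abs_lt.1 hst).2]
  have hp : 0 < t + s := by linarith [(abs_lt.1 hst).1]
  have hcf : 1 - r ^ 2 = (t - s) * (t + s) := by linarith
  have hrs : r ^ 2 - s ^ 2 = 1 - t ^ 2 := by linarith
  have hk : 0 < 3 - 2 * t ^ 2 := by linarith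
  have hk' : 1 + 2 * (1 - t ^ 2) = 3 - 2 * t ^ 2 := by ring
  rw [hcf] at hφ hs1
  rw [hrs] at hρ
  rw [hrs, hcf, hk']
  have hf : f = 1 / ((t - s) ^ 2 * t) := by
    rw [hφ]
    field_simp
  have hs1' : φs = (2 * t - s) / ((t - s) ^ 2 * t ^ 3) := by
    rw [hs1]
    field_simp
  have hσ' : σ1 = 1 / t ^ 3 := by
    rw [hσ, hf, hs1']
    field_simp
    ring
  have hρ' : ρ = (3 - 2 * t ^ 2) / ((t - s) ^ 2 * t ^ 6) := by
    rw [hρ, hf, hσ', hs2]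
    field_simp
    ring
  clear hφ hs1 hσ hρ
  subst hρ' hσ' hf hs1' hs2 hs3 hn
  refine ⟨by positivity, ?_⟩
  -- `1 / ρ` is `1 / (3 - 2t²)` times the square of `t³ (t - s)`.
  have hroot : Real.sqrt ((1 - t ^ 2) / ((3 - 2 * t ^ 2) / ((t - s) ^ 2 * t ^ 6))) =
      t ^ 3 * (t - s) * Real.sqrt ((1 - t ^ 2) / (3 - 2 * t ^ 2)) := by
    rw [← Real.sqrt_sq (show 0 ≤ t ^ 3 * (t - s) by positivity),
      ← Real.sqrt_mul (by positivity)]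
    congr 1
    field_simp
  rw [hroot, ← mul_assoc]
  congr 1
  rw [← abs_of_pos (show 0 < t ^ 3 * (t - s) by positivity), ← abs_mul,
    ← abs_of_pos (show 0 < 3 / (u * (1 / ((t - s) ^ 2 * t))) by positivity), ← abs_mul]
  congr 1
  push_cast
  field_simp
  ring
end
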